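/- For every λ ∈ ℝ, the diagonal map φ = (5/17) diag(1,2,2,3,3,4,5) is a pre-Einstein derivation of g_{1.3(i_λ)}: φ is a derivation of g_{1.3(i_λ)}, φ is diagonal (hence semisimple with real eigenvalues), and tr(φ ∘ ψ) = tr(ψ) for every derivation ψ of g_{1.3(i_λ)}. -/

import Mathlib

open Matrix BigOperators Polynomial

noncomputable section

abbrev Law (n : ℕ) := (Fin n → ℝ) → (Fin n → ℝ) → (Fin n → ℝ)

/-- `i`-th canonical basis vector of `ℝ^n`. -/
def bVec {n : ℕ} (i : Fin n) : Fin n → ℝ := Pi.single i 1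

def IsBilin {n : ℕ} (μ : Law n) : Prop :=
  (∀ X, IsLinearMap ℝ (μ X)) ∧ (∀ Y, IsLinearMap ℝ (fun X => μ X Y))

def IsSkew {n : ℕ} (μ : Law n) : Prop := ∀ X Y, μ X Y = - μ Y X

def IsJacobi {n : ℕ} (μ : Law n) : Prop :=
  ∀ X Y Z, μ (μ X Y) Z + μ (μ Y Z) X + μ (μ Z X) Y = 0

def IsLieLaw {n : ℕ} (μ : Law n) : Prop := IsBilin μ ∧ IsSkew μ ∧ IsJacobi μ

/-- lower central series of the law `μ`. -/
def lcs {n : ℕ} (μ : Law n) : ℕ → Submodule ℝ (Fin n → ℝ)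
  | 0 => ⊤
  | k + 1 => Submodule.span ℝ {z | ∃ x y, y ∈ lcs μ k ∧ z = μ x y}

def IsNilpotentLaw {n : ℕ} (μ : Law n) : Prop :=
  IsLieLaw μ ∧ ∃ k, lcs μ k = ⊥

/-- the action of `GL_n(ℝ)` on laws: `(g·μ)(X,Y) = g μ(g⁻¹X, g⁻¹Y)`. -/
def act {n : ℕ} (g : GL (Fin n) ℝ) (μ : Law n) : Law n :=
  fun X Y =>
    (g : Matrix (Fin n) (Fin n) ℝ).mulVec
      (μ (((g⁻¹ : GL (Fin n) ℝ) : Matrix (Fin n) (Fin n) ℝ).mulVec X)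
         (((g⁻¹ : GL (Fin n) ℝ) : Matrix (Fin n) (Fin n) ℝ).mulVec Y))

def IsDerivation {n : ℕ} (μ : Law n) (ψ : Matrix (Fin n) (Fin n) ℝ) : Prop :=
  ∀ X Y, ψ.mulVec (μ X Y) = μ (ψ.mulVec X) Y + μ X (ψ.mulVec Y)

/-- the unnormalized moment map `m(μ) = 4 Ric_μ`, as a matrix in the canonical basis. -/
def momentMap {n : ℕ} (μ : Law n) : Matrix (Fin n) (Fin n) ℝ :=
  Matrix.of fun k l =>
    4 * (-(1/2) * ∑ i, ∑ j, μ (bVec k) (bVec i) j * μ (bVec l) (bVec i) j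
      + (1/4) * ∑ i, ∑ j, μ (bVec i) (bVec j) k * μ (bVec i) (bVec j) l)

def IsEinsteinNilradical {n : ℕ} (μ : Law n) : Prop :=
  ∃ g : GL (Fin n) ℝ, ∃ c : ℝ, ∃ φ : Matrix (Fin n) (Fin n) ℝ,
    c < 0 ∧ φ.IsSymm ∧ IsDerivation (act g μ) φ ∧
    momentMap (act g μ) = c • (1 : Matrix (Fin n) (Fin n) ℝ) + φ

/-- build a (bilinear) law from a table `c` of structure constants on the
canonical basis, antisymmetrized: `[e_i, e_j] = c i j - c j i`. -/
def mkLaw {n : ℕ} (c : Fin n → Fin n → Fin n → ℝ) : Law n :=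
  fun X Y k => ∑ i, ∑ j, X i * Y j * (c i j k - c j i k)

/-- structure constants of `g_{1.3(i_λ)}`. -/
def c13 (lam : ℝ) : Fin 7 → Fin 7 → Fin 7 → ℝ := fun i j =>
  if i = 0 ∧ j = 1 then Pi.single 3 1
  else if i = 0 ∧ j = 2 then Pi.single 4 1
  else if i = 0 ∧ j = 3 then Pi.single 5 1
  else if i = 0 ∧ j = 5 then Pi.single 6 1
  else if i = 1 ∧ j = 2 then Pi.single 5 1
  else if i = 1 ∧ j = 3 then Pi.single 6 lam
  else if i = 1 ∧ j = 4 then Pi.single 6 1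
  else if i = 2 ∧ j = 4 then Pi.single 6 1
  else 0

/-- the Lie algebra law of `g_{1.3(i_λ)}`. -/
def law13 (lam : ℝ) : Law 7 := mkLaw (c13 lam)

/-!
The weights `d = (1, 2, 2, 3, 3, 4, 5)` grade the algebra, so `φ` is a derivation. Conversely, let
`ψ` be any derivation. Applying `ψ` to `[e₁, e₃] = e₅` and to `[e₁, e₅] = 0` kills the
`e₂`-component of `ψ e₃`; the brackets then express every diagonal entry of `ψ` through the first
one, so `ψ` has diagonal `t • d`. Hence `tr (a • diag d * ψ) = t a ∑ dᵢ²` while `tr ψ = t ∑ dᵢ`,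
and these agree for `a = ∑ dᵢ / ∑ dᵢ² = 20 / 68 = 5 / 17`.
-/

theorem mulVec_bVec {n : ℕ} (ψ : Matrix (Fin n) (Fin n) ℝ) (i : Fin n) :
    ψ *ᵥ bVec i = ∑ l, ψ l i • bVec l := by
  rw [bVec, mulVec_single_one]
  exact pi_eq_sum_univ' (ψ.col i)

/-- A bilinear law as a Mathlib bilinear map, giving access to extensionality on the basis. -/
def IsBilin.toLinearMap₂ {n : ℕ} {μ : Law n} (hμ : IsBilin μ) :
    (Fin n → ℝ) →ₗ[ℝ] (Fin n → ℝ) →ₗ[ℝ] (Fin n → ℝ) :=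
  LinearMap.mk₂ ℝ μ (fun X X' Y => (hμ.2 Y).map_add X X') (fun a X Y => (hμ.2 Y).map_smul a X)
    (fun X => (hμ.1 X).map_add) (fun a X => (hμ.1 X).map_smul a)

theorem IsBilin.toLinearMap₂_apply {n : ℕ} {μ : Law n} (hμ : IsBilin μ) (X Y : Fin n → ℝ) :
    hμ.toLinearMap₂ X Y = μ X Y := rfl

section Bilinear

variable {n : ℕ} {μ : Law n} {ψ : Matrix (Fin n) (Fin n) ℝ}

theorem IsBilin.isDerivation_iff_bVec (hμ : IsBilin μ) :
    IsDerivation μ ψ ↔ ∀ i j,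
      ψ *ᵥ μ (bVec i) (bVec j) = μ (ψ *ᵥ bVec i) (bVec j) + μ (bVec i) (ψ *ᵥ bVec j) := by
  refine ⟨fun h i j => h _ _, fun h X Y => ?_⟩
  have bilinear_eq : hμ.toLinearMap₂.compr₂ ψ.mulVecLin =
      hμ.toLinearMap₂ ∘ₗ ψ.mulVecLin + hμ.toLinearMap₂.compl₂ ψ.mulVecLin :=
    LinearMap.ext_basis (Pi.basisFun ℝ (Fin n)) (Pi.basisFun ℝ (Fin n)) fun i j => by
      simp only [Pi.basisFun_apply]
      exact h i j
  exact LinearMap.congr_fun₂ bilinear_eq X Y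

theorem IsBilin.isDerivation_iff_coord (hμ : IsBilin μ) :
    IsDerivation μ ψ ↔ ∀ i j k,
      ∑ l, ψ k l * μ (bVec i) (bVec j) l =
        ∑ l, ψ l i * μ (bVec l) (bVec j) k + ∑ l, ψ l j * μ (bVec i) (bVec l) k := by
  have map_left (i j k : Fin n) :
      μ (ψ *ᵥ bVec i) (bVec j) k = ∑ l, ψ l i * μ (bVec l) (bVec j) k := by
    simp only [mulVec_bVec, ← hμ.toLinearMap₂_apply, map_sum, map_smul, LinearMap.sum_apply,
      LinearMap.smul_apply, Finset.sum_apply, Pi.smul_apply, smul_eq_mul]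
  have map_right (i j k : Fin n) :
      μ (bVec i) (ψ *ᵥ bVec j) k = ∑ l, ψ l j * μ (bVec i) (bVec l) k := by
    simp only [mulVec_bVec, ← hμ.toLinearMap₂_apply, map_sum, map_smul, Finset.sum_apply,
      Pi.smul_apply, smul_eq_mul]
  simp only [hμ.isDerivation_iff_bVec, funext_iff, Pi.add_apply, map_left, map_right, mulVec,
    dotProduct]

theorem IsBilin.isDerivation_diagonal_iff (hμ : IsBilin μ) {d : Fin n → ℝ} :
    IsDerivation μ (diagonal d) ↔
      ∀ i j k, μ (bVec i) (bVec j) k ≠ 0 → d k = d i + d j := by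
  rw [hμ.isDerivation_iff_coord]
  refine forall₃_congr fun i j k => ?_
  simp only [diagonal_apply, ite_mul, zero_mul, Finset.sum_ite_eq, Finset.sum_ite_eq',
    Finset.mem_univ, if_true, ← add_mul, mul_eq_mul_right_iff]
  tauto

theorem IsDerivation.smul (hψ : IsDerivation μ ψ) (hμ : IsBilin μ) (a : ℝ) :
    IsDerivation μ (a • ψ) := fun X Y => by
  simp only [smul_mulVec, hψ X Y, (hμ.1 X).map_smul, (hμ.2 Y).map_smul, smul_add]

end Bilinear

section StructureConstants

variable {n : ℕ} (c : Fin n → Fin n → Fin n → ℝ)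

theorem isBilin_mkLaw : IsBilin (mkLaw c) := by
  refine ⟨fun X => ⟨fun Y Y' => ?_, fun a Y => ?_⟩, fun Y => ⟨fun X X' => ?_, fun a X => ?_⟩⟩
  all_goals
    funext k
    simp only [mkLaw, Pi.add_apply, Pi.smul_apply, smul_eq_mul, Finset.mul_sum,
      ← Finset.sum_add_distrib]
    exact Finset.sum_congr rfl fun i _ => Finset.sum_congr rfl fun j _ => by ring

theorem mkLaw_bVec (i j k : Fin n) : mkLaw c (bVec i) (bVec j) k = c i j k - c j i k := by
  simp [mkLaw, bVec, Pi.single_apply]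

variable {c} in
theorem isDerivation_mkLaw_diagonal {d : Fin n → ℝ}
    (hd : ∀ i j k, c i j k ≠ 0 → d k = d i + d j) : IsDerivation (mkLaw c) (diagonal d) := by
  refine (isBilin_mkLaw c).isDerivation_diagonal_iff.mpr fun i j k hk => ?_
  rw [mkLaw_bVec] at hk
  by_cases hij : c i j k = 0
  · rw [hd j i k fun hji => hk (by rw [hij, hji, sub_zero]), add_comm]
  · exact hd i j k hij

end StructureConstants

theorem trace_smul_diagonal_mul_of_diag_eq_smul {ι R : Type*} [Fintype ι] [DecidableEq ι]
    [CommSemiring R] {d : ι → R} {ψ : Matrix ι ι R} {a t : R} (ha : a * (d ⬝ᵥ d) = ∑ i, d i)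
    (hψ : ψ.diag = t • d) : trace ((a • diagonal d) * ψ) = trace ψ := by
  have hψ' (i : ι) : ψ i i = t * d i := congrFun hψ i
  calc trace ((a • diagonal d) * ψ) = a * ∑ i, d i * (t * d i) := by
        simp [trace, diagonal_mul, hψ', Finset.mul_sum]
    _ = t * (a * (d ⬝ᵥ d)) := by
        simp only [dotProduct, Finset.mul_sum]
        exact Finset.sum_congr rfl fun i _ => by ring
    _ = trace ψ := by simp only [ha, Finset.mul_sum, trace, diag_apply, hψ']

/-- The degrees of `e₁, …, e₇` in the positive grading of `g_{1.3(i_λ)}`. -/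
def weight13 : Fin 7 → ℝ := ![1, 2, 2, 3, 3, 4, 5]

theorem weight13_eq_add_of_c13_ne_zero {lam : ℝ} {i j k : Fin 7} (h : c13 lam i j k ≠ 0) :
    weight13 k = weight13 i + weight13 j := by
  unfold c13 at h
  split_ifs at h <;> simp_all [Pi.single_apply, weight13] <;> norm_num

theorem isDerivation_diagonal_weight13 (lam : ℝ) :
    IsDerivation (law13 lam) (diagonal weight13) :=
  isDerivation_mkLaw_diagonal fun _ _ _ => weight13_eq_add_of_c13_ne_zero

theorem weight13_normalization : (5 / 17 : ℝ) * (weight13 ⬝ᵥ weight13) = ∑ i, weight13 i := by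
  simp only [weight13, dotProduct, Fin.sum_univ_seven, cons_val]
  norm_num

theorem diag_eq_smul_weight13 {lam : ℝ} {ψ : Matrix (Fin 7) (Fin 7) ℝ}
    (hψ : IsDerivation (law13 lam) ψ) : ψ.diag = ψ 0 0 • weight13 := by
  have coord (i j k : Fin 7) := (isBilin_mkLaw (c13 lam)).isDerivation_iff_coord.mp hψ i j k
  simp only [mkLaw_bVec, Fin.sum_univ_seven] at coord
  have diag₃ : ψ 3 3 = ψ 0 0 + ψ 1 1 := by simpa [c13] using coord 0 1 3
  have diag₄ : ψ 4 4 = ψ 0 0 + ψ 2 2 := by simpa [c13] using coord 0 2 4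
  have diag₅ : ψ 5 5 = ψ 0 0 + ψ 3 3 := by simpa [c13] using coord 0 3 5
  have diag₅' : ψ 5 5 = ψ 1 1 + ψ 2 2 := by simpa [c13] using coord 1 2 5
  have diag₆ : ψ 6 6 = ψ 0 0 + ψ 5 5 := by simpa [c13] using coord 0 5 6
  have diag₆' : ψ 6 6 = ψ 1 2 + ψ 2 2 + ψ 4 4 := by simpa [c13] using coord 2 4 6
  have offDiag : ψ 1 2 = 0 :=
    calc ψ 1 2 = ψ 3 4 := by simpa [c13] using (coord 0 2 3).symm
      _ = 0 := by simpa [c13] using (coord 0 4 5).symm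
  have diag₂ : ψ 2 2 = 2 * ψ 0 0 := by linarith
  have diag₁ : ψ 1 1 = 2 * ψ 0 0 := by linarith
  funext i
  fin_cases i <;> simp [weight13, diag₁, diag₂, diag₃, diag₄, diag₅, diag₆] <;> ring

/-- `φ = (5/17) diag(1,2,2,3,3,4,5)` is a pre-Einstein derivation of
`g_{1.3(i_λ)}` for every `λ`. -/
theorem stmt_7 (lam : ℝ) :
    IsDerivation (law13 lam)
      ((5/17 : ℝ) • Matrix.diagonal (![1, 2, 2, 3, 3, 4, 5] : Fin 7 → ℝ)) ∧
    (∀ ψ : Matrix (Fin 7) (Fin 7) ℝ, IsDerivation (law13 lam) ψ →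
      Matrix.trace
        (((5/17 : ℝ) • Matrix.diagonal (![1, 2, 2, 3, 3, 4, 5] : Fin 7 → ℝ)) * ψ) =
        Matrix.trace ψ) := by
  change IsDerivation (law13 lam) ((5 / 17 : ℝ) • diagonal weight13) ∧
    ∀ ψ, IsDerivation (law13 lam) ψ → trace ((5 / 17 : ℝ) • diagonal weight13 * ψ) = trace ψ
  exact ⟨(isDerivation_diagonal_weight13 lam).smul (isBilin_mkLaw _) _, fun ψ hψ =>
    trace_smul_diagonal_mul_of_diag_eq_smul weight13_normalization (diag_eq_smul_weight13 hψ)⟩
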